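/- Let d ≥ 1 be an integer and L > 0. Let θ₁, …, θ_d : ℝ^d → ℂ be continuous, L-periodic in each coordinate, with absolutely summable Fourier coefficients (Σ_{m ∈ ℤ^d} |θ̂_p(m)| < ∞ for each p), and let C²_{p,q} : ℝ^d → ℂ (1 ≤ p,q ≤ d) be continuous and L-periodic in each coordinate. Define B : ℝ^d × ℝ^d → ℂ by B(x,y) = Σ_{p,q=1}^d (θ_p(x) - θ_p(y)) C²_{p,q}(x-y) (θ_q(x) - θ_q(y)). Then for all k, ℓ ∈ ℤ^d, B̂(k+ℓ, -k) = Σ_{p,q=1}^d Σ_{ω ∈ ℤ^d} θ̂_p(ω) θ̂_q(ℓ-ω) [ Ĉ²_{p,q}(k) + Ĉ²_{p,q}(k+ℓ) - Ĉ²_{p,q}(k+ℓ-ω) - Ĉ²_{p,q}(k+ω) ]. -/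

import Mathlib

open MeasureTheory

/-- A function on `ℝ^d` is `L`-periodic in each coordinate. -/
def PeriodicEach (d : ℕ) (L : ℝ) (h : (Fin d → ℝ) → ℂ) : Prop :=
  ∀ (x : Fin d → ℝ) (j : Fin d), h (Function.update x j (x j + L)) = h x

/-- The `m`-th Fourier coefficient of an `L`-periodic function on `ℝ^d`:
`ĥ(m) = L^{-d} ∫_{[0,L)^d} h(x) e^{-2πi m·x/L} dx`. -/
noncomputable def fCoef (d : ℕ) (L : ℝ) (h : (Fin d → ℝ) → ℂ) (m : Fin d → ℤ) : ℂ :=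
  (1 / (L : ℂ) ^ d) *
    ∫ x in Set.univ.pi fun _ : Fin d => Set.Ico (0:ℝ) L,
      h x * Complex.exp (-(2 * (Real.pi : ℂ) * Complex.I *
        (∑ j, (m j : ℂ) * (x j : ℂ)) / (L : ℂ)))

/-- The `(m,n)`-th Fourier coefficient of an `L`-periodic function on `ℝ^d × ℝ^d`:
`B̂(m,n) = L^{-2d} ∫∫_{[0,L)^d × [0,L)^d} B(x,y) e^{-2πi (m·x + n·y)/L} dx dy`. -/
noncomputable def fCoef2 (d : ℕ) (L : ℝ) (B : (Fin d → ℝ) → (Fin d → ℝ) → ℂ)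
    (m n : Fin d → ℤ) : ℂ :=
  (1 / (L : ℂ) ^ (2 * d)) *
    ∫ x in Set.univ.pi fun _ : Fin d => Set.Ico (0:ℝ) L,
      ∫ y in Set.univ.pi fun _ : Fin d => Set.Ico (0:ℝ) L,
        B x y * Complex.exp (-(2 * (Real.pi : ℂ) * Complex.I *
          ((∑ j, (m j : ℂ) * (x j : ℂ)) + ∑ j, (n j : ℂ) * (y j : ℂ)) / (L : ℂ)))

/-!
Both sides live on the torus. There
`(f(x) - f(y)) c(x - y) (g(x) - g(y)) = W(fg, c, 1) + W(1, c, fg) - W(f, c, g) - W(g, c, f)`, where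
`W(u, c, v)(x, y) = u(x) c(x - y) v(y)`. Integrating out `y`, the coefficient of `W(u, c, v)` of
order `(m, n)` is the `m`-th coefficient of `u · ((e₋ₙ v) ∗ c)`, `e₋ₙ` being the character of
frequency `-n`. The convolution multiplies coefficients, and the product becomes a discrete
convolution, absolutely convergent by Parseval's identity. At `(k + ℓ, -k)` the four kernels give
the four terms of the bracket, the last one after the substitution `ω ↦ ℓ - ω`.
-/

section Kernels

variable {G : Type*} [TopologicalSpace G] [Sub G] [ContinuousSub G]

/-- The kernel `(x, y) ↦ u(x) c(x - y) v(y)`: a translation-invariant kernel multiplied by a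
function of each variable. The second-order term is a combination of four such kernels. -/
noncomputable def weightedDiffKernel (u c v : C(G, ℂ)) : C(G × G, ℂ) where
  toFun z := u z.1 * c (z.1 - z.2) * v z.2

/-- The kernel `(x, y) ↦ (f(x) - f(y)) c(x - y) (g(x) - g(y))`, one summand of the second-order
term. -/
noncomputable def secondOrderKernel (f c g : C(G, ℂ)) : C(G × G, ℂ) where
  toFun z := (f z.1 - f z.2) * c (z.1 - z.2) * (g z.1 - g z.2)

theorem secondOrderKernel_eq_weightedDiffKernel (f c g : C(G, ℂ)) :
    secondOrderKernel f c g =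
      weightedDiffKernel (f * g) c 1 + weightedDiffKernel 1 c (f * g)
        - weightedDiffKernel f c g - weightedDiffKernel g c f := by
  ext z
  simp only [secondOrderKernel, weightedDiffKernel, ContinuousMap.coe_mk, ContinuousMap.sub_apply,
    ContinuousMap.add_apply, ContinuousMap.mul_apply, ContinuousMap.one_apply]
  ring

end Kernels

section FourierCoefficients

open UnitAddTorus

-- Mathlib's Fourier analysis on the torus uses these probability measures, which it keeps local.
attribute [local instance] instMeasureSpaceUnitAddCircle instIsAddHaarMeasureUnitAddCircleVolume
  instIsProbabilityMeasureUnitAddCircleVolume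

section Torus

open ContinuousLinearMap
open scoped Convolution ComplexConjugate

variable {ι : Type*} [Fintype ι]

theorem mFourier_apply_add (n : ι → ℤ) (x y : UnitAddTorus ι) :
    mFourier n (x + y) = mFourier n x * mFourier n y := by
  simp only [mFourier, ContinuousMap.coe_mk, ← Finset.prod_mul_distrib, Pi.add_apply,
    fourier_apply, smul_add, AddCircle.toCircle_add, Circle.coe_mul]

theorem mFourier_apply_neg (n : ι → ℤ) (x : UnitAddTorus ι) :
    mFourier n (-x) = mFourier (-n) x := by
  simp only [mFourier, ContinuousMap.coe_mk, Pi.neg_apply, fourier_apply, smul_neg, neg_smul]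

theorem integrable_continuousMap {X : Type*} [TopologicalSpace X] [CompactSpace X]
    [MeasurableSpace X] [OpensMeasurableSpace X] {E : Type*} [NormedAddCommGroup E]
    (μ : Measure X) [IsFiniteMeasureOnCompacts μ] (f : C(X, E)) : Integrable f μ :=
  f.continuous.integrable_of_hasCompactSupport (.of_compactSpace f)

theorem mFourierCoeff_const_smul {E : Type*} [NormedAddCommGroup E] [NormedSpace ℂ E] (a : ℂ)
    (f : UnitAddTorus ι → E) (n : ι → ℤ) :
    mFourierCoeff (a • f) n = a • mFourierCoeff f n := by
  simp only [mFourierCoeff, Pi.smul_apply, smul_comm _ a, integral_smul]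

theorem mFourierCoeff_mFourier_mul (k : ι → ℤ) (f : UnitAddTorus ι → ℂ) (n : ι → ℤ) :
    mFourierCoeff (⇑(mFourier k) * f) n = mFourierCoeff f (n - k) := by
  simp only [mFourierCoeff, Pi.mul_apply, smul_eq_mul, ← mul_assoc, ← mFourier_add, neg_sub,
    neg_add_eq_sub]

theorem mFourierCoeff_star (f : UnitAddTorus ι → ℂ) (n : ι → ℤ) :
    mFourierCoeff (star f) n = conj (mFourierCoeff f (-n)) := by
  simp only [mFourierCoeff, ← integral_conj, smul_eq_mul, map_mul, ← mFourier_neg, neg_neg]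
  rfl

theorem hasSum_mFourierCoeff_mul (f g : C(UnitAddTorus ι, ℂ)) (n : ι → ℤ) :
    HasSum (fun ω ↦ mFourierCoeff f ω * mFourierCoeff g (n - ω)) (mFourierCoeff (f * g) n) := by
  have parseval := hasSum_prod_mFourierCoeff ((star f).toLp 2 volume ℂ)
    ((mFourier (-n) * g).toLp 2 volume ℂ)
  have integral_eq :
      ∫ t, conj ((star f).toLp 2 volume ℂ t) * (mFourier (-n) * g).toLp 2 volume ℂ t =
        mFourierCoeff (f * g) n := by
    refine integral_congr_ae ?_
    filter_upwards [ContinuousMap.coeFn_toLp (p := 2) (𝕜 := ℂ) volume (star f),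
      ContinuousMap.coeFn_toLp (p := 2) (𝕜 := ℂ) volume (mFourier (-n) * g)] with t star_f_eq g_eq
    rw [star_f_eq, g_eq, ContinuousMap.star_apply, ContinuousMap.mul_apply, starRingEnd_apply,
      star_star, mul_left_comm]
    rfl
  rw [integral_eq, ← (Equiv.neg _).hasSum_iff] at parseval
  convert! parseval using 2 with ω
  simp only [Function.comp_apply, Equiv.neg_apply, mFourierCoeff_toLp, ContinuousMap.coe_star,
    ContinuousMap.coe_mul, mFourierCoeff_star, mFourierCoeff_mFourier_mul, Complex.conj_conj,
    neg_neg, sub_neg_eq_add, neg_add_eq_sub]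

/-- Convolution of continuous functions on the torus, with respect to the Haar probability
measure, as a continuous function. -/
noncomputable def torusConvolution (f g : C(UnitAddTorus ι, ℂ)) : C(UnitAddTorus ι, ℂ) where
  toFun := f ⋆[mul ℂ ℂ, volume] g
  continuous_toFun := (HasCompactSupport.of_compactSpace g).continuous_convolution_right _
    (integrable_continuousMap _ f).locallyIntegrable g.continuous

theorem mFourierCoeff_torusConvolution (f g : C(UnitAddTorus ι, ℂ)) (n : ι → ℤ) :
    mFourierCoeff (torusConvolution f g) n = mFourierCoeff f n * mFourierCoeff g n := by
  have mFourier_mul_convolution :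
      ⇑(mFourier (-n)) * (f ⋆[mul ℂ ℂ, volume] g) =
        ⇑(mFourier (-n) * f) ⋆[mul ℂ ℂ, volume] ⇑(mFourier (-n) * g) := by
    ext x
    simp only [Pi.mul_apply, ContinuousMap.mul_apply, convolution_mul, ← integral_const_mul]
    congr! 2 with t
    rw [← add_sub_cancel t x, mFourier_apply_add, add_sub_cancel]
    ring
  calc mFourierCoeff (torusConvolution f g) n
      = ∫ x, (⇑(mFourier (-n) * f) ⋆[mul ℂ ℂ, volume] ⇑(mFourier (-n) * g)) x := by
        rw [← mFourier_mul_convolution]; rfl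
    _ = mFourierCoeff f n * mFourierCoeff g n :=
        integral_convolution _ (integrable_continuousMap _ (mFourier (-n) * f))
          (integrable_continuousMap _ (mFourier (-n) * g))

theorem torusConvolution_mFourier_left (k : ι → ℤ) (g : C(UnitAddTorus ι, ℂ)) :
    torusConvolution (mFourier k) g = mFourierCoeff g k • mFourier k := by
  have : (volume : Measure (UnitAddTorus ι)).IsNegInvariant :=
    Measure.IsAddHaarMeasure.isNegInvariant_of_regular _
  ext x
  calc torusConvolution (mFourier k) g x
      = ∫ t, mFourier k (x - t) * g t := convolution_mul_swap ..
    _ = mFourierCoeff g k * mFourier k x := by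
        simp only [sub_eq_add_neg, mFourier_apply_add, mFourier_apply_neg, mul_assoc,
          integral_const_mul]
        exact mul_comm ..

/-- The Fourier coefficient of order `(m, n)` of a continuous function on the product of two tori,
as a linear functional. -/
noncomputable def mFourierCoeffProd (m n : ι → ℤ) :
    C(UnitAddTorus ι × UnitAddTorus ι, ℂ) →ₗ[ℂ] ℂ where
  toFun K := ∫ z, mFourier (-m) z.1 * mFourier (-n) z.2 * K z
  map_add' K K' := by
    simp only [ContinuousMap.add_apply, mul_add]
    exact integral_add
      (integrable_continuousMap _
        ⟨fun z ↦ mFourier (-m) z.1 * mFourier (-n) z.2 * K z, by fun_prop⟩)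
      (integrable_continuousMap _
        ⟨fun z ↦ mFourier (-m) z.1 * mFourier (-n) z.2 * K' z, by fun_prop⟩)
  map_smul' a K := by
    simp only [ContinuousMap.smul_apply, smul_eq_mul, mul_left_comm _ a, integral_const_mul,
      RingHom.id_apply]

theorem mFourierCoeffProd_eq_integral_integral (m n : ι → ℤ)
    (K : C(UnitAddTorus ι × UnitAddTorus ι, ℂ)) :
    mFourierCoeffProd m n K = ∫ x, ∫ y, mFourier (-m) x * mFourier (-n) y * K (x, y) :=
  integral_prod _ (integrable_continuousMap _
    ⟨fun z ↦ mFourier (-m) z.1 * mFourier (-n) z.2 * K z, by fun_prop⟩)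

theorem mFourierCoeffProd_weightedDiffKernel (u c v : C(UnitAddTorus ι, ℂ)) (m n : ι → ℤ) :
    mFourierCoeffProd m n (weightedDiffKernel u c v) =
      mFourierCoeff (u * torusConvolution (mFourier (-n) * v) c) m := by
  rw [mFourierCoeffProd_eq_integral_integral]
  refine integral_congr_ae (.of_forall fun x ↦ ?_)
  calc ∫ y, mFourier (-m) x * mFourier (-n) y * (u x * c (x - y) * v y)
      = ∫ y, mFourier (-m) x * u x * (mFourier (-n) y * v y * c (x - y)) := by
        congr! 2 with y
        ring
    _ = mFourier (-m) x * (u x * torusConvolution (mFourier (-n) * v) c x) := by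
        rw [integral_const_mul, mul_assoc]; rfl

theorem hasSum_mFourierCoeffProd_weightedDiffKernel (u c v : C(UnitAddTorus ι, ℂ))
    (m n : ι → ℤ) :
    HasSum (fun ω ↦ mFourierCoeff u ω * mFourierCoeff v (m + n - ω) * mFourierCoeff c (m - ω))
      (mFourierCoeffProd m n (weightedDiffKernel u c v)) := by
  rw [mFourierCoeffProd_weightedDiffKernel]
  convert hasSum_mFourierCoeff_mul u (torusConvolution (mFourier (-n) * v) c) m using 2 with ω
  rw [mFourierCoeff_torusConvolution, ContinuousMap.coe_mul, mFourierCoeff_mFourier_mul, mul_assoc,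
    sub_neg_eq_add, sub_add_eq_add_sub]

theorem mFourierCoeffProd_weightedDiffKernel_one_right (u c : C(UnitAddTorus ι, ℂ))
    (m n : ι → ℤ) :
    mFourierCoeffProd m n (weightedDiffKernel u c 1) =
      mFourierCoeff u (m + n) * mFourierCoeff c (-n) := by
  rw [mFourierCoeffProd_weightedDiffKernel, mul_one, torusConvolution_mFourier_left,
    mul_smul_comm, mul_comm u, ContinuousMap.coe_smul, mFourierCoeff_const_smul,
    ContinuousMap.coe_mul, mFourierCoeff_mFourier_mul, sub_neg_eq_add, smul_eq_mul, mul_comm]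

theorem mFourierCoeffProd_weightedDiffKernel_one_left (c v : C(UnitAddTorus ι, ℂ))
    (m n : ι → ℤ) :
    mFourierCoeffProd m n (weightedDiffKernel 1 c v) =
      mFourierCoeff v (m + n) * mFourierCoeff c m := by
  rw [mFourierCoeffProd_weightedDiffKernel, one_mul, mFourierCoeff_torusConvolution,
    ContinuousMap.coe_mul, mFourierCoeff_mFourier_mul, sub_neg_eq_add]

theorem hasSum_mFourierCoeffProd_secondOrderKernel (f c g : C(UnitAddTorus ι, ℂ))
    (k l : ι → ℤ) :
    HasSum (fun ω ↦ mFourierCoeff f ω * mFourierCoeff g (l - ω) *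
        (mFourierCoeff c k + mFourierCoeff c (k + l) -
          mFourierCoeff c (k + l - ω) - mFourierCoeff c (k + ω)))
      (mFourierCoeffProd (k + l) (-k) (secondOrderKernel f c g)) := by
  have sum_mul := hasSum_mFourierCoeff_mul f g l
  have sum_fg := hasSum_mFourierCoeffProd_weightedDiffKernel f c g (k + l) (-k)
  have sum_gf := (Equiv.subLeft l).hasSum_iff.2
    (hasSum_mFourierCoeffProd_weightedDiffKernel g c f (k + l) (-k))
  rw [secondOrderKernel_eq_weightedDiffKernel, map_sub, map_sub, map_add,
    mFourierCoeffProd_weightedDiffKernel_one_right, mFourierCoeffProd_weightedDiffKernel_one_left]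
  rw [add_neg_cancel_comm] at sum_fg sum_gf ⊢
  rw [neg_neg]
  convert! (((sum_mul.mul_right _).add (sum_mul.mul_right _)).sub sum_fg).sub sum_gf using 2 with ω
  have reflected_index : k + l - (l - ω) = k + ω := by abel
  simp only [Function.comp_apply, Equiv.subLeft_apply, sub_sub_cancel, reflected_index]
  ring

end Torus

section Rescaling

variable {ι : Type*} {L : ℝ}

/-- The map `x ↦ x / L` from `ℝ^ι` to the unit torus. For `L ≠ 0` it is the covering map that
identifies functions `L`-periodic in each coordinate with functions on the torus. -/
noncomputable def scaledTorusMk (L : ℝ) (x : ι → ℝ) : UnitAddTorus ι :=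
  fun j ↦ ((L⁻¹ * x j : ℝ) : UnitAddCircle)

theorem scaledTorusMk_sub (x y : ι → ℝ) :
    scaledTorusMk L (x - y) = scaledTorusMk L x - scaledTorusMk L y := by
  ext j
  simp only [scaledTorusMk, Pi.sub_apply, mul_sub, AddCircle.coe_sub]

theorem isOpenQuotientMap_scaledTorusMk (hL : L ≠ 0) :
    IsOpenQuotientMap (scaledTorusMk L : (ι → ℝ) → UnitAddTorus ι) :=
  .piMap fun _ ↦ QuotientAddGroup.isOpenQuotientMap_mk.comp
    (Homeomorph.mulLeft₀ L⁻¹ (inv_ne_zero hL)).isOpenQuotientMap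

theorem exists_eq_add_of_scaledTorusMk_eq (hL : L ≠ 0) {x y : ι → ℝ}
    (hxy : scaledTorusMk L x = scaledTorusMk L y) : ∃ n : ι → ℤ, y = x + fun j ↦ n j * L := by
  have exists_int (j : ι) : ∃ n : ℤ, y j = x j + n * L := by
    obtain ⟨n, hn⟩ := AddSubgroup.mem_zmultiples_iff.1 (QuotientAddGroup.eq.1 (congrFun hxy j))
    refine ⟨n, ?_⟩
    rw [zsmul_eq_mul, mul_one] at hn
    rw [hn]
    field_simp
    ring
  choose n hn using exists_int
  exact ⟨n, funext hn⟩

variable {d : ℕ} {h : (Fin d → ℝ) → ℂ}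

theorem PeriodicEach.periodic_single (hp : PeriodicEach d L h) (j : Fin d) :
    Function.Periodic h (Pi.single j L) := fun x ↦ by
  rw [← hp x j]
  congr 1
  ext i
  obtain rfl | hij := eq_or_ne i j <;> simp [*]

theorem PeriodicEach.periodic_intCast_mul (hp : PeriodicEach d L h) (n : Fin d → ℤ) :
    Function.Periodic h (fun j ↦ n j * L) := by
  have sum_single : (fun j ↦ n j * L) = ∑ j, n j • Pi.single j L := by
    ext i
    simp [Finset.sum_apply, Pi.single_apply]
  rw [sum_single]
  refine Finset.sum_induction _ (Function.Periodic h) (fun _ _ ↦ .add_period) ?_ fun j _ ↦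
    (hp.periodic_single j).zsmul (n j)
  simp [Function.Periodic]

theorem PeriodicEach.exists_continuousMap_torus (hp : PeriodicEach d L h) (hL : L ≠ 0)
    (hc : Continuous h) :
    ∃ H : C(UnitAddTorus (Fin d), ℂ), ∀ x, H (scaledTorusMk L x) = h x := by
  have quotient := (isOpenQuotientMap_scaledTorusMk (ι := Fin d) hL).isQuotientMap
  have factors : Function.FactorsThrough h (scaledTorusMk L) := fun x y hxy ↦ by
    obtain ⟨n, rfl⟩ := exists_eq_add_of_scaledTorusMk_eq hL hxy
    exact (hp.periodic_intCast_mul n x).symm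
  let mk : C(Fin d → ℝ, UnitAddTorus (Fin d)) := ⟨scaledTorusMk L, quotient.continuous⟩
  have quotient_mk : Topology.IsQuotientMap mk := quotient
  exact ⟨quotient_mk.lift ⟨h, hc⟩ factors,
    DFunLike.congr_fun (quotient_mk.lift_comp ⟨h, hc⟩ factors)⟩

variable [Fintype ι]

open scoped Pointwise in
theorem setIntegral_comp_scaledTorusMk {E : Type*} [NormedAddCommGroup E] [NormedSpace ℝ E]
    (hL : 0 < L) (G : UnitAddTorus ι → E) :
    ∫ x in Set.univ.pi fun _ : ι ↦ Set.Ico 0 L, G (scaledTorusMk L x) =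
      L ^ Fintype.card ι • ∫ t, G t := by
  have box_ae_eq : (Set.univ.pi fun _ : ι ↦ Set.Ico 0 L) =ᵐ[volume]
      (Set.univ.pi fun _ : ι ↦ Set.Ioc 0 L) :=
    Measure.univ_pi_Ico_ae_eq_Icc.trans Measure.univ_pi_Ioc_ae_eq_Icc.symm
  have smul_box : L⁻¹ • (Set.univ.pi fun _ : ι ↦ Set.Ioc 0 L) =
      {x : ι → ℝ | ∀ i, x i ∈ Set.Ioc 0 (0 + 1)} := by
    rw [Set.smul_set_pi₀ (inv_ne_zero hL.ne')]
    ext x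
    simp [LinearOrderedField.smul_Ioc (inv_pos.2 hL), hL.ne']
  let unitMk (x : ι → ℝ) : UnitAddTorus ι := fun i ↦ (x i : UnitAddCircle)
  calc ∫ x in Set.univ.pi fun _ : ι ↦ Set.Ico 0 L, G (scaledTorusMk L x)
      = ∫ x in Set.univ.pi fun _ : ι ↦ Set.Ioc 0 L, G (unitMk (L⁻¹ • x)) :=
        setIntegral_congr_set box_ae_eq
    _ = L ^ Fintype.card ι • ∫ x in L⁻¹ • (Set.univ.pi fun _ : ι ↦ Set.Ioc 0 L), G (unitMk x) := by
        rw [Measure.setIntegral_comp_smul_of_pos volume (fun x ↦ G (unitMk x)) _ (inv_pos.2 hL),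
          Module.finrank_fintype_fun_eq_card, inv_pow, inv_inv]
    _ = L ^ Fintype.card ι • ∫ t, G t := by
        rw [smul_box, integral_preimage G 0]
        rfl

theorem mFourier_scaledTorusMk (m : ι → ℤ) (x : ι → ℝ) :
    mFourier m (scaledTorusMk L x) =
      Complex.exp (2 * Real.pi * Complex.I * (∑ j, (m j : ℂ) * (x j : ℂ)) / L) := by
  simp only [mFourier, ContinuousMap.coe_mk, scaledTorusMk, fourier_coe_apply, ← Complex.exp_sum]
  rw [Finset.mul_sum, Finset.sum_div]
  congr! 2 with j
  push_cast
  ring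

theorem mFourier_neg_scaledTorusMk (m : ι → ℤ) (x : ι → ℝ) :
    mFourier (-m) (scaledTorusMk L x) =
      Complex.exp (-(2 * Real.pi * Complex.I * (∑ j, (m j : ℂ) * (x j : ℂ)) / L)) := by
  rw [mFourier_neg, mFourier_scaledTorusMk, ← Complex.exp_conj]
  simp [Complex.conj_ofNat, neg_div]

theorem fCoef_eq_mFourierCoeff (hL : 0 < L) (H : UnitAddTorus (Fin d) → ℂ)
    (hH : ∀ x, H (scaledTorusMk L x) = h x) (m : Fin d → ℤ) :
    fCoef d L h m = mFourierCoeff H m := by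
  have integral_eq := setIntegral_comp_scaledTorusMk hL fun t ↦ mFourier (-m) t • H t
  simp only [hH, mFourier_neg_scaledTorusMk, smul_eq_mul, mul_comm _ (h _), Fintype.card_fin,
    Complex.real_smul, Complex.ofReal_pow] at integral_eq
  rw [fCoef, integral_eq, ← mul_assoc, one_div_mul_cancel (by simp [hL.ne']), one_mul]
  rfl

theorem fCoef2_eq_mFourierCoeffProd (hL : 0 < L) {B : (Fin d → ℝ) → (Fin d → ℝ) → ℂ}
    (K : C(UnitAddTorus (Fin d) × UnitAddTorus (Fin d), ℂ))
    (hK : ∀ x y, K (scaledTorusMk L x, scaledTorusMk L y) = B x y) (m n : Fin d → ℤ) :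
    fCoef2 d L B m n = mFourierCoeffProd m n K := by
  have integrand_eq (x y : Fin d → ℝ) :
      B x y * Complex.exp (-(2 * Real.pi * Complex.I *
          ((∑ j, (m j : ℂ) * (x j : ℂ)) + ∑ j, (n j : ℂ) * (y j : ℂ)) / L)) =
        mFourier (-m) (scaledTorusMk L x) * mFourier (-n) (scaledTorusMk L y) *
          K (scaledTorusMk L x, scaledTorusMk L y) := by
    rw [hK, mFourier_neg_scaledTorusMk, mFourier_neg_scaledTorusMk, ← Complex.exp_add, mul_comm,
      mul_add, add_div, neg_add]
  have inner_integral_eq (x : Fin d → ℝ) := setIntegral_comp_scaledTorusMk hL fun t ↦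
    mFourier (-m) (scaledTorusMk L x) * mFourier (-n) t * K (scaledTorusMk L x, t)
  have outer_integral_eq := setIntegral_comp_scaledTorusMk hL fun s ↦
    ∫ t, mFourier (-m) s * mFourier (-n) t * K (s, t)
  have L_ne_zero : (L : ℂ) ≠ 0 := Complex.ofReal_ne_zero.2 hL.ne'
  simp only [fCoef2, integrand_eq, inner_integral_eq, integral_const_mul, outer_integral_eq,
    mFourierCoeffProd_eq_integral_integral, Fintype.card_fin, Complex.real_smul,
    Complex.ofReal_pow, pow_mul']
  field_simp

end Rescaling

end FourierCoefficients

theorem statement7_general {ι : Type*} [Fintype ι] (d : ℕ) (L : ℝ) (hL : 0 < L)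
    (θ : ι → (Fin d → ℝ) → ℂ)
    (hθc : ∀ p, Continuous (θ p)) (hθp : ∀ p, PeriodicEach d L (θ p))
    (C2 : ι → ι → (Fin d → ℝ) → ℂ)
    (hC2c : ∀ p q, Continuous (C2 p q)) (hC2p : ∀ p q, PeriodicEach d L (C2 p q))
    (B : (Fin d → ℝ) → (Fin d → ℝ) → ℂ)
    (hB : ∀ x y, B x y = ∑ p, ∑ q, (θ p x - θ p y) * C2 p q (x - y) * (θ q x - θ q y))
    (k ℓ : Fin d → ℤ) :
    (∀ p q, Summable fun ω : Fin d → ℤ ↦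
      fCoef d L (θ p) ω * fCoef d L (θ q) (ℓ - ω) *
        (fCoef d L (C2 p q) k + fCoef d L (C2 p q) (k + ℓ) -
          fCoef d L (C2 p q) (k + ℓ - ω) - fCoef d L (C2 p q) (k + ω))) ∧
    fCoef2 d L B (k + ℓ) (-k) =
      ∑ p, ∑ q, ∑' ω : Fin d → ℤ,
        fCoef d L (θ p) ω * fCoef d L (θ q) (ℓ - ω) *
          (fCoef d L (C2 p q) k + fCoef d L (C2 p q) (k + ℓ) -
            fCoef d L (C2 p q) (k + ℓ - ω) - fCoef d L (C2 p q) (k + ω)) := by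
  choose F hF using fun p ↦ (hθp p).exists_continuousMap_torus hL.ne' (hθc p)
  choose C hC using fun p q ↦ (hC2p p q).exists_continuousMap_torus hL.ne' (hC2c p q)
  have kernel_eq (x y : Fin d → ℝ) : (∑ p, ∑ q, secondOrderKernel (F p) (C p q) (F q))
      (scaledTorusMk L x, scaledTorusMk L y) = B x y := by
    simp only [ContinuousMap.sum_apply, secondOrderKernel, ContinuousMap.coe_mk,
      ← scaledTorusMk_sub, hF, hC, hB]
  have hasSum_summand (p q : ι) :=
    hasSum_mFourierCoeffProd_secondOrderKernel (F p) (C p q) (F q) k ℓ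
  simp only [fCoef_eq_mFourierCoeff hL _ (hF _), fCoef_eq_mFourierCoeff hL _ (hC _ _),
    fCoef2_eq_mFourierCoeffProd hL _ kernel_eq, map_sum]
  exact ⟨fun p q ↦ (hasSum_summand p q).summable, Finset.sum_congr rfl fun p _ ↦
    Finset.sum_congr rfl fun q _ ↦ (hasSum_summand p q).tsum_eq.symm⟩

/-- Fourier coefficients of the second-order term
`B(x,y) = Σ_{p,q} (θ_p(x) - θ_p(y)) C²_{p,q}(x-y) (θ_q(x) - θ_q(y))`:
for all `k, ℓ ∈ ℤ^d`,
`B̂(k+ℓ,-k) = Σ_{p,q} Σ_ω θ̂_p(ω) θ̂_q(ℓ-ω)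
  [Ĉ²_{p,q}(k) + Ĉ²_{p,q}(k+ℓ) - Ĉ²_{p,q}(k+ℓ-ω) - Ĉ²_{p,q}(k+ω)]`. -/
theorem statement7 (d : ℕ) (hd : 1 ≤ d) (L : ℝ) (hL : 0 < L)
    (θ : Fin d → (Fin d → ℝ) → ℂ)
    (hθc : ∀ p, Continuous (θ p)) (hθp : ∀ p, PeriodicEach d L (θ p))
    (hθsum : ∀ p, Summable fun m : Fin d → ℤ => ‖fCoef d L (θ p) m‖)
    (C2 : Fin d → Fin d → (Fin d → ℝ) → ℂ)
    (hC2c : ∀ p q, Continuous (C2 p q)) (hC2p : ∀ p q, PeriodicEach d L (C2 p q))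
    (B : (Fin d → ℝ) → (Fin d → ℝ) → ℂ)
    (hB : ∀ x y, B x y = ∑ p, ∑ q, (θ p x - θ p y) * C2 p q (x - y) * (θ q x - θ q y))
    (k ℓ : Fin d → ℤ) :
    fCoef2 d L B (k + ℓ) (-k) =
      ∑ p, ∑ q, ∑' ω : Fin d → ℤ,
        fCoef d L (θ p) ω * fCoef d L (θ q) (ℓ - ω) *
          (fCoef d L (C2 p q) k + fCoef d L (C2 p q) (k + ℓ) -
            fCoef d L (C2 p q) (k + ℓ - ω) - fCoef d L (C2 p q) (k + ω)) :=
  (statement7_general d L hL θ hθc hθp C2 hC2c hC2p B hB k ℓ).2
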